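/- For all natural numbers m, n and p, the ℓ-adic q-binomial coefficients satisfy ⟨m+n; n⟩_λ · ⟨m+n+p; p⟩_λ = ⟨n+p; n⟩_λ · ⟨m+n+p; m⟩_λ. -/

import Mathlib

/-!
Both sides are values of one expression, the `ℓ`-adic q-trinomial coefficient
`T(m, n, p) = ⟨m+n; n⟩ ⟨m+n+p; p⟩`, and the claim is the symmetry `T(m, n, p) = T(p, n, m)`.
If adding the lowest base-`ℓ` digits of `m`, `n`, `p` produces a carry, the lowest digit of some sum
is smaller than that of a summand, so `T` vanishes; this condition is symmetric. If there is no
carry, `T` is the q-trinomial coefficient `[a+b+c]! / ([a]! [b]! [c]!)` of the lowest digits, which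
is visibly symmetric, times the value of `T` at the quotients by `ℓ`; one concludes by induction.
The q-factorials that get cancelled do not vanish, since `q^{2j} ≠ 1` for `0 < j < ℓ`.
-/

noncomputable section

namespace QD

/-- The q-binomial coefficient `[m; n]_q = ∏_{j=1}^{n} (q^{m-j+1} - q^{-m+j-1})/(q^j - q^{-j})`. -/
def qbinom (q : ℂ) (m : ℤ) (n : ℕ) : ℂ :=
  ∏ j ∈ Finset.range n, (q ^ (m - j) - q ^ (-m + j)) / (q ^ ((j : ℤ) + 1) - q ^ (-(j : ℤ) - 1))

/-- The `i`-th digit of `m` in base `ℓ`. -/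
def digit (ℓ m i : ℕ) : ℕ := m / ℓ ^ i % ℓ

/-- The `ℓ`-adic q-binomial coefficient `⟨m; n⟩_q = ∏_{i ≥ 0} [m_i; n_i]_q`, where `m_i, n_i`
are the base-`ℓ` digits of `m` and `n`.  (All factors with `i > m + n` equal `1` since the
corresponding digits vanish when `ℓ ≥ 2`, so the product may be cut off at `m + n + 1`.) -/
def lbinom (ℓ : ℕ) (q : ℂ) (m n : ℕ) : ℂ :=
  ∏ i ∈ Finset.range (m + n + 1), qbinom q (digit ℓ m i) (digit ℓ n i)

section QFactorial

variable {K : Type*} [Field K]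

/-- The unnormalised q-factorial `∏_{j=1}^{n} (q^j - q^{-j})`. The usual factors `q - q⁻¹` in the
denominators are omitted, since they cancel in q-binomial coefficients. -/
def qfac (q : K) (n : ℕ) : K :=
  ∏ j ∈ Finset.range n, (q ^ ((j : ℤ) + 1) - q ^ (-(j : ℤ) - 1))

/-- The q-trinomial coefficient `[a+b+c]! / ([a]! [b]! [c]!)`, the value of the `ℓ`-adic one on
digits. -/
def qtrinom (q : K) (a b c : ℕ) : K :=
  qfac q (a + b + c) / (qfac q a * qfac q b * qfac q c)

lemma qfac_ne_zero {q : K} (hq₀ : q ≠ 0) {n : ℕ} (hq : ∀ j, 0 < j → j ≤ n → q ^ (2 * j) ≠ 1) :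
    qfac q n ≠ 0 := by
  refine Finset.prod_ne_zero_iff.mpr fun j hj hzero => ?_
  refine hq (j + 1) j.succ_pos (Finset.mem_range.mp hj) ?_
  have hinv : q ^ (j + 1) = (q ^ (j + 1))⁻¹ := by
    rw [← zpow_natCast, ← zpow_neg, Nat.cast_succ, neg_add']
    exact sub_eq_zero.mp hzero
  rw [two_mul, pow_add]
  nth_rewrite 2 [hinv]
  exact mul_inv_cancel₀ (pow_ne_zero _ hq₀)

lemma qfac_add (q : K) (a b : ℕ) :
    qfac q (a + b) = qfac q a *
      ∏ j ∈ Finset.range b, (q ^ ((a + b : ℕ) - j : ℤ) - q ^ (-(a + b : ℕ) + j : ℤ)) := by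
  -- The right-hand product lists the top `b` factors of `qfac q (a + b)` in decreasing order.
  rw [qfac, qfac, Finset.prod_range_add, ← Finset.prod_range_reflect (n := b)]
  congr 1
  refine Finset.prod_congr rfl fun j hj => ?_
  have hcast : ((b - 1 - j : ℕ) : ℤ) = b - 1 - j := by
    have := Finset.mem_range.mp hj
    omega
  push_cast [hcast]
  congr 2 <;> ring

lemma qtrinom_reverse (q : K) (a b c : ℕ) : qtrinom q a b c = qtrinom q c b a := by
  have hsum : a + b + c = c + b + a := by omega
  rw [qtrinom, qtrinom, hsum]
  ring

end QFactorial

lemma qbinom_eq_zero_of_lt (q : ℂ) {m n : ℕ} (h : m < n) : qbinom q m n = 0 :=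
  Finset.prod_eq_zero (Finset.mem_range.mpr h) (by simp)

lemma qbinom_add_eq_div {q : ℂ} {a : ℕ} (ha : qfac q a ≠ 0) (b : ℕ) :
    qbinom q (a + b : ℕ) b = qfac q (a + b) / (qfac q a * qfac q b) := by
  rw [qfac_add, mul_div_mul_left _ _ ha, qbinom, Finset.prod_div_distrib, qfac]

lemma qbinom_mul_qbinom_eq_qtrinom {q : ℂ} {a b : ℕ} (ha : qfac q a ≠ 0)
    (hab : qfac q (a + b) ≠ 0) (c : ℕ) :
    qbinom q (a + b : ℕ) b * qbinom q (a + b + c : ℕ) c = qtrinom q a b c := by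
  rw [qbinom_add_eq_div ha, qbinom_add_eq_div hab, qtrinom]
  field_simp

lemma digit_zero (ℓ n : ℕ) : digit ℓ n 0 = n % ℓ := by
  rw [digit, pow_zero, Nat.div_one]

lemma digit_succ (ℓ n i : ℕ) : digit ℓ n (i + 1) = digit ℓ (n / ℓ) i := by
  rw [digit, digit, pow_succ', Nat.div_div_eq_div_mul]

lemma digit_eq_zero_of_lt_pow {ℓ n i : ℕ} (h : n < ℓ ^ i) : digit ℓ n i = 0 := by
  rw [digit, Nat.div_eq_of_lt h, Nat.zero_mod]

/-- The `ℓ`-adic q-trinomial coefficient of `m`, `n`, `p`, encoded as a product of two `ℓ`-adic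
q-binomial coefficients; the claim is its invariance under exchanging `m` and `p`. -/
def ltrinom (ℓ : ℕ) (q : ℂ) (m n p : ℕ) : ℂ :=
  lbinom ℓ q (m + n) n * lbinom ℓ q (m + n + p) p

section Carries

variable {ℓ : ℕ} (hℓ : 1 < ℓ)
include hℓ

lemma lbinom_eq_prod_range (q : ℂ) (m : ℕ) {n N : ℕ} (hN : n ≤ N) :
    lbinom ℓ q m n = ∏ i ∈ Finset.range N, qbinom q (digit ℓ m i) (digit ℓ n i) := by
  have factor_eq_one : ∀ i ≥ n, qbinom q (digit ℓ m i) (digit ℓ n i) = 1 := fun i hi => by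
    rw [digit_eq_zero_of_lt_pow (hi.trans_lt (Nat.lt_pow_self hℓ)), qbinom, Finset.prod_range_zero]
  rw [lbinom, Finset.eventually_constant_prod factor_eq_one (by omega : n ≤ m + n + 1),
    Finset.eventually_constant_prod factor_eq_one hN]

lemma lbinom_eq_qbinom_mod_mul_lbinom_div (q : ℂ) (m n : ℕ) :
    lbinom ℓ q m n = qbinom q (m % ℓ : ℕ) (n % ℓ) * lbinom ℓ q (m / ℓ) (n / ℓ) := by
  rw [lbinom_eq_prod_range hℓ q m n.le_succ,
    lbinom_eq_prod_range hℓ q (m / ℓ) (n.div_le_self ℓ), Finset.prod_range_succ', mul_comm]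
  simp only [digit_zero, digit_succ]

lemma lbinom_add_eq_zero_of_carry (q : ℂ) {a b : ℕ} (h : ℓ ≤ a % ℓ + b % ℓ) :
    lbinom ℓ q (a + b) b = 0 := by
  have hlt : (a + b) % ℓ < b % ℓ := by
    have := Nat.add_mod_add_of_le_add_mod h
    have := a.mod_lt (zero_lt_one.trans hℓ)
    omega
  rw [lbinom_eq_qbinom_mod_mul_lbinom_div hℓ, qbinom_eq_zero_of_lt q hlt, zero_mul]

lemma lbinom_add_eq_mul_of_no_carry (q : ℂ) {a b : ℕ} (h : a % ℓ + b % ℓ < ℓ) :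
    lbinom ℓ q (a + b) b =
      qbinom q (a % ℓ + b % ℓ : ℕ) (b % ℓ) * lbinom ℓ q (a / ℓ + b / ℓ) (b / ℓ) := by
  rw [lbinom_eq_qbinom_mod_mul_lbinom_div hℓ, Nat.add_mod_of_add_mod_lt h,
    Nat.add_div_eq_of_add_mod_lt h]

lemma ltrinom_eq_zero_of_carry (q : ℂ) {m n p : ℕ} (h : ℓ ≤ m % ℓ + n % ℓ + p % ℓ) :
    ltrinom ℓ q m n p = 0 := by
  rcases le_or_gt ℓ (m % ℓ + n % ℓ) with carry | no_carry
  · rw [ltrinom, lbinom_add_eq_zero_of_carry hℓ q carry, zero_mul]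
  · rw [← Nat.add_mod_of_add_mod_lt no_carry] at h
    rw [ltrinom, lbinom_add_eq_zero_of_carry hℓ q h, mul_zero]

lemma ltrinom_eq_qtrinom_mul_of_no_carry {q : ℂ} (hfac : ∀ k < ℓ, qfac q k ≠ 0) {m n p : ℕ}
    (h : m % ℓ + n % ℓ + p % ℓ < ℓ) :
    ltrinom ℓ q m n p =
      qtrinom q (m % ℓ) (n % ℓ) (p % ℓ) * ltrinom ℓ q (m / ℓ) (n / ℓ) (p / ℓ) := by
  have hmn : m % ℓ + n % ℓ < ℓ := (Nat.le_add_right _ _).trans_lt h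
  have hmod : (m + n) % ℓ = m % ℓ + n % ℓ := Nat.add_mod_of_add_mod_lt hmn
  have hdiv : (m + n) / ℓ = m / ℓ + n / ℓ := Nat.add_div_eq_of_add_mod_lt hmn
  have hmnp : (m + n) % ℓ + p % ℓ < ℓ := by rwa [hmod]
  rw [ltrinom, lbinom_add_eq_mul_of_no_carry hℓ q hmn,
    lbinom_add_eq_mul_of_no_carry hℓ q hmnp, hmod, hdiv, mul_mul_mul_comm,
    qbinom_mul_qbinom_eq_qtrinom (hfac _ (m.mod_lt (zero_lt_one.trans hℓ))) (hfac _ hmn), ltrinom]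

lemma ltrinom_reverse {q : ℂ} (hfac : ∀ k < ℓ, qfac q k ≠ 0) (m n p : ℕ) :
    ltrinom ℓ q m n p = ltrinom ℓ q p n m := by
  induction hs : m + n + p using Nat.strong_induction_on generalizing m n p with
  | _ s ih =>
    subst hs
    rcases le_or_gt ℓ (m % ℓ + n % ℓ + p % ℓ) with carry | no_carry
    · have carry' : ℓ ≤ p % ℓ + n % ℓ + m % ℓ := by omega
      rw [ltrinom_eq_zero_of_carry hℓ q carry, ltrinom_eq_zero_of_carry hℓ q carry']
    rcases (m + n + p).eq_zero_or_pos with hzero | hpos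
    · obtain ⟨rfl, rfl, rfl⟩ : m = 0 ∧ n = 0 ∧ p = 0 := by omega
      rfl
    have no_carry' : p % ℓ + n % ℓ + m % ℓ < ℓ := by omega
    have hlt : m / ℓ + n / ℓ + p / ℓ < m + n + p :=
      calc m / ℓ + n / ℓ + p / ℓ
        _ ≤ (m + n) / ℓ + p / ℓ := by gcongr; exact Nat.div_add_div_le_add_div
        _ ≤ (m + n + p) / ℓ := Nat.div_add_div_le_add_div
        _ < m + n + p := Nat.div_lt_self hpos hℓ
    rw [ltrinom_eq_qtrinom_mul_of_no_carry hℓ hfac no_carry,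
      ltrinom_eq_qtrinom_mul_of_no_carry hℓ hfac no_carry',
      qtrinom_reverse, ih _ hlt _ _ _ rfl]

end Carries

theorem lbinom_mul_lbinom_general {ℓ : ℕ} (hℓ : 1 < ℓ) {q : ℂ} (hq₀ : q ≠ 0)
    (hq : ∀ j, 0 < j → j < ℓ → q ^ (2 * j) ≠ 1) (m n p : ℕ) :
    lbinom ℓ q (m + n) n * lbinom ℓ q (m + n + p) p
      = lbinom ℓ q (n + p) n * lbinom ℓ q (m + n + p) m := by
  have hfac : ∀ k < ℓ, qfac q k ≠ 0 := fun k hk =>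
    qfac_ne_zero hq₀ fun j hj hjk => hq j hj (hjk.trans_lt hk)
  have hsum : p + n + m = m + n + p := by omega
  calc lbinom ℓ q (m + n) n * lbinom ℓ q (m + n + p) p
    _ = lbinom ℓ q (p + n) n * lbinom ℓ q (p + n + m) m := ltrinom_reverse hℓ hfac m n p
    _ = lbinom ℓ q (n + p) n * lbinom ℓ q (m + n + p) m := by rw [hsum, add_comm p n]

/-- for all natural numbers `m`, `n` and `p`, the `ℓ`-adic q-binomial coefficients
satisfy `⟨m+n; n⟩_λ · ⟨m+n+p; p⟩_λ = ⟨n+p; n⟩_λ · ⟨m+n+p; m⟩_λ`. -/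
theorem lbinom_mul_lbinom (ℓ : ℕ) (hℓ : 1 < ℓ) (hodd : Odd ℓ) (q : ℂ)
    (hq : IsPrimitiveRoot q ℓ) (m n p : ℕ) :
    lbinom ℓ q (m + n) n * lbinom ℓ q (m + n + p) p
      = lbinom ℓ q (n + p) n * lbinom ℓ q (m + n + p) m := by
  have hq_sq : IsPrimitiveRoot (q ^ 2) ℓ := hq.pow_of_coprime 2 (Nat.coprime_two_left.mpr hodd)
  exact lbinom_mul_lbinom_general hℓ (hq.ne_zero (by omega))
    (fun j hj hjℓ => pow_mul q 2 j ▸ hq_sq.pow_ne_one_of_pos_of_lt hj.ne' hjℓ) m n p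

end QD
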